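/- Functoriality property of the bang modality on the light monoid: for all p, q in M, !(p + q) ≤ F(p) + !q, where for p = (n, m, f) one sets F(p) = (1 + n + m, m, fun x => x³ · f(x³)). -/

import Mathlib

/-- An element of the light monoid: a triple `(n, m, f)` with `f : ℕ → ℕ` monotone. -/
structure LightM where
  n : ℕ
  m : ℕ
  f : ℕ → ℕ
  mono : Monotone f

namespace LightM

/-- Addition: `(n, m, f) + (l, k, g) = (n + l, max m k, pointwise max of f and g)`. -/
def add (p q : LightM) : LightM :=
  ⟨p.n + q.n, max p.m q.m, fun x => max (p.f x) (q.f x), p.mono.max q.mono⟩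

/-- Norm: `‖(n, m, f)‖ = n * f (n + m)`. -/
def norm (p : LightM) : ℕ := p.n * p.f (p.n + p.m)

/-- The zero element `(0, 0, fun _ => 0)`. -/
def zero : LightM := ⟨0, 0, fun _ => 0, monotone_const⟩

/-- The numeral `k`, i.e. the element `(k, 0, fun _ => 0)`. -/
def ofNat (k : ℕ) : LightM := ⟨k, 0, fun _ => 0, monotone_const⟩

/-- Order: `p ≤ q` iff for all `r`, `‖p + r‖ ≤ ‖q + r‖`. -/
def le (p q : LightM) : Prop := ∀ r : LightM, norm (add p r) ≤ norm (add q r)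

/-- Strict order: `p < q` iff for all `r`, `‖p + r‖ < ‖q + r‖`. -/
def lt (p q : LightM) : Prop := ∀ r : LightM, norm (add p r) < norm (add q r)

/-- Paragraph modality: `§(n, m, f) = (n / m, m, fun x => x ^ 2 * f (x ^ 2))`. -/
def para (p : LightM) : LightM :=
  ⟨p.n / p.m, p.m, fun x => x ^ 2 * p.f (x ^ 2),
   fun _ _ h => Nat.mul_le_mul (Nat.pow_le_pow_left h 2) (p.mono (Nat.pow_le_pow_left h 2))⟩

/-- Bang modality: `!(n, m, f) = (1, n + m, fun x => x ^ 3 * f (x ^ 3))`. -/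
def bang (p : LightM) : LightM :=
  ⟨1, p.n + p.m, fun x => x ^ 3 * p.f (x ^ 3),
   fun _ _ h => Nat.mul_le_mul (Nat.pow_le_pow_left h 3) (p.mono (Nat.pow_le_pow_left h 3))⟩

/-- The operation `F(n, m, f) = (1 + n + m, m, fun x => x ^ 3 * f (x ^ 3))`. -/
def Fop (p : LightM) : LightM :=
  ⟨1 + p.n + p.m, p.m, fun x => x ^ 3 * p.f (x ^ 3),
   fun _ _ h => Nat.mul_le_mul (Nat.pow_le_pow_left h 3) (p.mono (Nat.pow_le_pow_left h 3))⟩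

end LightM

open LightM

namespace LightM

variable {p q : LightM}

theorem norm_le_norm (hn : p.n ≤ q.n) (hnm : p.n + p.m ≤ q.n + q.m) (hf : p.f ≤ q.f) :
    norm p ≤ norm q :=
  Nat.mul_le_mul hn ((p.mono hnm).trans (hf _))

theorem add_n_add_m (p r : LightM) :
    (add p r).n + (add p r).m = r.n + max (p.n + p.m) (p.n + r.m) := by
  simp only [add]
  omega

/-- The components `m` need not be comparable: addition takes their maximum, so `+ r` preserves the
bounds on `n` and on `n + m`. -/
theorem le_of_n_le_of_n_add_m_le_of_f_le (hn : p.n ≤ q.n) (hnm : p.n + p.m ≤ q.n + q.m)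
    (hf : p.f ≤ q.f) : le p q := by
  intro r
  apply norm_le_norm
  · exact Nat.add_le_add_right hn r.n
  · rw [add_n_add_m, add_n_add_m]
    gcongr
  · exact sup_le_sup_right hf r.f

theorem bang_add_f (p q : LightM) : (bang (add p q)).f = (bang p).f ⊔ (bang q).f :=
  funext fun _ => (Nat.mul_max_mul_left ..).symm

theorem bang_add_n_add_m_le (p q : LightM) :
    (bang (add p q)).n + (bang (add p q)).m ≤
      (add (Fop p) (bang q)).n + (add (Fop p) (bang q)).m := by
  simp only [add, bang, Fop]
  omega

end LightM

/-- Functoriality property of the bang modality: `!(p + q) ≤ F(p) + !q`. -/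
theorem lightM_bang_functorial (p q : LightM) :
    le (bang (add p q)) (add (Fop p) (bang q)) := by
  have n_le : (bang (add p q)).n ≤ (add (Fop p) (bang q)).n := Nat.le_add_left 1 _
  have f_le : (bang (add p q)).f ≤ (add (Fop p) (bang q)).f := (bang_add_f p q).le
  exact le_of_n_le_of_n_add_m_le_of_f_le n_le (bang_add_n_add_m_le p q) f_le
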